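/- In the finite discriminative clustering setup, for every real α > 0 with α ≠ 1, if the clustering is a Dirac model then the one-vs-all α-divergence GEMINI attains its upper bound: I_α^{ova} := ∑_{k=1}^K π(k) · ∑_{x∈X} p(x) · f_α(c(x,k)/π(k)) = (α(α−1))^{-1} · (−1 + ∑_{k=1}^K π(k)^{2−α}). -/

import Mathlib

open Finset

/-!
For a Dirac clustering `c x k` takes only the values `0` and `1`, with mean `π k`, so the inner
expectation of `f (c x k / π k)` is the two-point average `π k * f (1 / π k) + (1 - π k) * f 0`.
For `f = f_α` one has `f 0 = 1 / α`, and everything but the power term collapses to a constant: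
the average equals `(π k ^ (1 - α) - 1) / (α * (α - 1))`. Weighting by `π k` and using `∑ π k = 1`
gives the value of the bound.
-/

/-- The generator `f_α` of the `α`-divergence. It is meaningful for `t ≥ 0`, `0 < α`, `α ≠ 1`;
the division by `α * (α - 1)` returns the junk value `0` when `α = 1`. -/
noncomputable def alphaDivGenerator (α t : ℝ) : ℝ :=
  (t ^ α - α * t + (α - 1)) / (α * (α - 1))

lemma alphaDivGenerator_zero {α : ℝ} (hα : 0 < α) (hα1 : α ≠ 1) :
    alphaDivGenerator α 0 = α⁻¹ := by
  have hα1' : α - 1 ≠ 0 := sub_ne_zero.2 hα1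
  rw [alphaDivGenerator, Real.zero_rpow hα.ne']
  field_simp
  ring

lemma mul_alphaDivGenerator_inv (α : ℝ) {q : ℝ} (hq : 0 < q) :
    q * alphaDivGenerator α q⁻¹ = (q ^ (1 - α) - α + (α - 1) * q) / (α * (α - 1)) := by
  have hpow : q * q⁻¹ ^ α = q ^ (1 - α) := by
    rw [Real.inv_rpow hq.le, Real.rpow_sub hq, Real.rpow_one, div_eq_mul_inv]
  rw [alphaDivGenerator, ← mul_div_assoc, ← hpow]
  congr 1
  linear_combination -α * mul_inv_cancel₀ hq.ne'

lemma alphaDivGenerator_two_point_average {α q : ℝ} (hα : 0 < α) (hα1 : α ≠ 1) (hq : 0 < q) :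
    q * alphaDivGenerator α q⁻¹ + (1 - q) * alphaDivGenerator α 0
      = (α * (α - 1))⁻¹ * (q ^ (1 - α) - 1) := by
  have hα1' : α - 1 ≠ 0 := sub_ne_zero.2 hα1
  rw [mul_alphaDivGenerator_inv α hq, alphaDivGenerator_zero hα hα1]
  field_simp
  ring

lemma mul_alphaDivGenerator_two_point_average {α q : ℝ} (hα : 0 < α) (hα1 : α ≠ 1) (hq : 0 < q) :
    q * (q * alphaDivGenerator α q⁻¹ + (1 - q) * alphaDivGenerator α 0)
      = (α * (α - 1))⁻¹ * (q ^ (2 - α) - q) := by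
  have hpow : q ^ (2 - α) = q * q ^ (1 - α) := by
    rw [show 2 - α = 1 + (1 - α) by ring, Real.rpow_add hq, Real.rpow_one]
  rw [alphaDivGenerator_two_point_average hα hα1 hq, hpow]
  ring

lemma sum_mul_apply_of_eq_zero_or_one {X R : Type*} [CommRing R] (s : Finset X) (p : X → R)
    {u : X → R} (hu : ∀ x ∈ s, u x = 0 ∨ u x = 1) (g : R → R) :
    ∑ x ∈ s, p x * g (u x)
      = (∑ x ∈ s, p x * u x) * g 1 + (∑ x ∈ s, p x - ∑ x ∈ s, p x * u x) * g 0 := by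
  rw [← sum_sub_distrib, sum_mul, sum_mul, ← sum_add_distrib]
  refine sum_congr rfl fun x hx => ?_
  rcases hu x hx with h | h <;> simp [h]

section Clustering

variable {X ι : Type*} [Fintype X]

/-- The proportion `π k` of cluster `k`: the mean of the posterior `c · k` under the weights `p`. -/
noncomputable def clusterProportion (p : X → ℝ) (c : X → ι → ℝ) (k : ι) : ℝ :=
  ∑ x, p x * c x k

/-- The one-vs-all GEMINI of the divergence with generator `f`: the average over the clusters of
the `f`-divergence between the data distribution conditioned on the cluster and the data
distribution `p`. By Bayes' rule the ratio of the two distributions is `c x k / π k`. -/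
noncomputable def ovaGemini [Fintype ι] (f : ℝ → ℝ) (p : X → ℝ) (c : X → ι → ℝ) : ℝ :=
  ∑ k, clusterProportion p c k * ∑ x, p x * f (c x k / clusterProportion p c k)

variable [Fintype ι] {p : X → ℝ} {c : X → ι → ℝ}

lemma sum_clusterProportion (hc1 : ∀ x, ∑ k, c x k = 1) :
    ∑ k, clusterProportion p c k = ∑ x, p x := by
  simp only [clusterProportion]
  rw [sum_comm]
  simp only [← mul_sum, hc1, mul_one]

lemma ovaGemini_eq_of_dirac (hp1 : ∑ x, p x = 1) (hdirac : ∀ x k, c x k = 0 ∨ c x k = 1)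
    (f : ℝ → ℝ) :
    ovaGemini f p c = ∑ k, clusterProportion p c k *
      (clusterProportion p c k * f (clusterProportion p c k)⁻¹
        + (1 - clusterProportion p c k) * f 0) := by
  refine sum_congr rfl fun k _ => ?_
  rw [sum_mul_apply_of_eq_zero_or_one univ p (fun x _ => hdirac x k)
    fun t => f (t / clusterProportion p c k), hp1, one_div, zero_div, ← clusterProportion]

theorem gemini_ova_alpha_div_dirac_attains_bound_general
    (hp1 : ∑ x, p x = 1) (hc1 : ∀ x, ∑ k, c x k = 1)
    (hpos : ∀ k, 0 < clusterProportion p c k) (hdirac : ∀ x k, c x k = 0 ∨ c x k = 1)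
    {α : ℝ} (hα : 0 < α) (hα1 : α ≠ 1) :
    ovaGemini (alphaDivGenerator α) p c
      = (α * (α - 1))⁻¹ * (-1 + ∑ k, clusterProportion p c k ^ (2 - α)) := by
  calc ovaGemini (alphaDivGenerator α) p c
      = ∑ k, (α * (α - 1))⁻¹ * (clusterProportion p c k ^ (2 - α) - clusterProportion p c k) := by
        rw [ovaGemini_eq_of_dirac hp1 hdirac]
        exact sum_congr rfl fun k _ => mul_alphaDivGenerator_two_point_average hα hα1 (hpos k)
    _ = (α * (α - 1))⁻¹ * (-1 + ∑ k, clusterProportion p c k ^ (2 - α)) := by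
        rw [← mul_sum, sum_sub_distrib, sum_clusterProportion hc1, hp1, neg_add_eq_sub]

end Clustering

/-- In the finite discriminative clustering setup, for every real
`α > 0` with `α ≠ 1`, a Dirac clustering model attains the upper bound of the
one-vs-all α-divergence GEMINI. -/
theorem gemini_ova_alpha_div_dirac_attains_bound
    {X : Type*} [Fintype X] [Nonempty X]
    (p : X → ℝ) (hp : ∀ x, 0 < p x) (hp1 : ∑ x, p x = 1)
    (K : ℕ) (hK : 0 < K)
    (c : X → Fin K → ℝ) (hc : ∀ x k, 0 ≤ c x k) (hc1 : ∀ x, ∑ k, c x k = 1)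
    (pr : Fin K → ℝ) (hpr : ∀ k, pr k = ∑ x, p x * c x k) (hprpos : ∀ k, 0 < pr k)
    (hdirac : ∀ x k, c x k = 0 ∨ c x k = 1)
    (α : ℝ) (hα : 0 < α) (hα1 : α ≠ 1) :
    ∑ k, pr k * ∑ x, p x *
        (((c x k / pr k) ^ α - α * (c x k / pr k) + (α - 1)) / (α * (α - 1)))
      = (α * (α - 1))⁻¹ * (-1 + ∑ k, pr k ^ (2 - α)) := by
  obtain rfl : pr = clusterProportion p c := funext hpr
  exact gemini_ova_alpha_div_dirac_attains_bound_general hp1 hc1 hprpos hdirac hα hα1
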